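/- Let L be a g-symmetric nilpotent endomorphism of V. Then there exist a basis of V, positive integers n₁ ≤ n₂ ≤ ... ≤ n_k with n₁ + ... + n_k = dim V, and signs ε₁, ..., ε_k ∈ {1, −1}, such that in this basis the matrix of L is the block-diagonal matrix diag(J_{n₁}, ..., J_{n_k}) and the matrix of g is the block-diagonal matrix diag(ε₁S_{n₁}, ..., ε_k S_{n_k}). -/

import Mathlib

/-!
Let `m` be maximal with `L ^ m ≠ 0`. Then `(u, v) ↦ g (L ^ m u) v` is a nonzero symmetric form, so
some `x` has `g (L ^ m x) x ≠ 0`. On the chain of `x` only the products `g (L ^ a x) x` matter, and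
they can be made to vanish for `a = m - 1, ..., 0` in turn, each time by replacing `x` by
`x + c • L ^ (m - a) x`. The chain of the corrected vector spans an `L`-invariant subspace on which
`g` is nondegenerate, so one continues in its orthogonal complement. Over a field of characteristic
different from `2` this leaves scalars `ε i` that matter only modulo squares; over `ℝ` they become
signs.
-/

section SelfAdjoint

variable {R M : Type*} [CommSemiring R] [AddCommMonoid M] [Module R M]
  {g : LinearMap.BilinForm R M} {L : Module.End R M}

theorem isSelfAdjoint_pow (hL : g.IsSelfAdjoint L) (a : ℕ) : g.IsSelfAdjoint ⇑(L ^ a) := by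
  induction a with
  | zero => exact LinearMap.isAdjointPair_one
  | succ a ih =>
    have h : LinearMap.IsAdjointPair g g (L ^ a * L) (L * L ^ a) := ih.mul hL
    rwa [← pow_succ, ← pow_succ'] at h

theorem form_pow_apply_pow_apply (hL : g.IsSelfAdjoint L) (a b : ℕ) (u v : M) :
    g ((L ^ a) u) ((L ^ b) v) = g ((L ^ (a + b)) u) v := by
  rw [← isSelfAdjoint_pow hL b, ← Module.End.mul_apply, ← pow_add, add_comm]

theorem isSymm_compLeft_pow (hg : g.IsSymm) (hL : g.IsSelfAdjoint L) (a : ℕ) :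
    (g.compLeft (L ^ a)).IsSymm where
  eq u v := by
    rw [LinearMap.BilinForm.compLeft_apply, LinearMap.BilinForm.compLeft_apply, hg.eq,
      isSelfAdjoint_pow hL]

theorem form_pow_apply_add_smul_pow_apply (hL : g.IsSelfAdjoint L) (c : R) (j a : ℕ) (y : M) :
    g ((L ^ a) (y + c • (L ^ j) y)) (y + c • (L ^ j) y) =
      g ((L ^ a) y) y + 2 * c * g ((L ^ (a + j)) y) y + c ^ 2 * g ((L ^ (a + 2 * j)) y) y := by
  have hpow : g ((L ^ (a + j)) y) y = g ((L ^ a) ((L ^ j) y)) y := by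
    rw [pow_add, Module.End.mul_apply]
  have hcross : g ((L ^ (a + j)) ((L ^ j) y)) y = g ((L ^ (a + 2 * j)) y) y := by
    rw [← Module.End.mul_apply, ← pow_add, two_mul, add_assoc]
  simp only [map_add, map_smul, LinearMap.add_apply, LinearMap.smul_apply, smul_eq_mul,
    form_pow_apply_pow_apply hL a j, ← hpow, hcross]
  ring

theorem map_mem_orthogonal (hL : g.IsSelfAdjoint L) {W : Submodule R M} (hW : ∀ w ∈ W, L w ∈ W) :
    ∀ y ∈ g.orthogonal W, L y ∈ g.orthogonal W := fun y hy w hw =>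
  (hL w y).symm.trans (hy (L w) (hW w hw))

end SelfAdjoint

section Chain

variable {R M : Type*} [CommSemiring R] [AddCommMonoid M] [Module R M]

/-- `x` generates a Jordan chain `L ^ (n - 1) x, ..., L x, x` of `L` of length `n`, on which the
Gram matrix of `g` is the antidiagonal matrix `ε S_n`. -/
structure IsChainGenerator (g : LinearMap.BilinForm R M) (L : Module.End R M) (n : ℕ) (ε : Rˣ)
    (x : M) : Prop where
  pos : 0 < n
  pow_apply_eq_zero : (L ^ n) x = 0
  form_pow_apply (a : ℕ) : g ((L ^ a) x) x = if a + 1 = n then (ε : R) else 0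

/-- Generators `u i` of Jordan chains of lengths `n i` and scalars `ε i` as in `IsChainGenerator`
whose chains are pairwise `g`-orthogonal. For self-adjoint `L` it is enough to compare one chain
with the generator of the other. -/
structure IsOrthogonalChainFamily {ι : Type*} (g : LinearMap.BilinForm R M) (L : Module.End R M)
    (n : ι → ℕ) (ε : ι → Rˣ) (u : ι → M) : Prop where
  isChainGenerator (i : ι) : IsChainGenerator g L (n i) (ε i) (u i)
  form_eq_zero {i j : ι} (hij : i ≠ j) (a : ℕ) : g ((L ^ a) (u i)) (u j) = 0

/-- The vectors of the chains generated by `u`, as a family indexed like the rows of a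
block-diagonal matrix. Each chain is listed from its last vector to its generator, so that `L` acts
by upper triangular Jordan blocks. -/
def chainVector {ι : Type*} (L : Module.End R M) (n : ι → ℕ) (u : ι → M)
    (p : (i : ι) × Fin (n i)) : M :=
  (L ^ (p.2.rev : ℕ)) (u p.1)

/-- The subspace spanned by the chains generated by `u`. -/
def chainSpan {ι : Type*} (L : Module.End R M) (n : ι → ℕ) (u : ι → M) : Submodule R M :=
  Submodule.span R (Set.range (chainVector L n u))

variable {g : LinearMap.BilinForm R M} {L : Module.End R M}

theorem IsChainGenerator.units_smul {n : ℕ} {ε : Rˣ} {x : M} (hx : IsChainGenerator g L n ε x)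
    (c : Rˣ) : IsChainGenerator g L n (c ^ 2 * ε) (c • x) where
  pos := hx.pos
  pow_apply_eq_zero := by
    rw [Units.smul_def, map_smul, hx.pow_apply_eq_zero, smul_zero]
  form_pow_apply a := by
    simp only [Units.smul_def, map_smul, LinearMap.smul_apply, hx.form_pow_apply, smul_eq_mul,
      mul_ite, mul_zero, Units.val_mul, sq, mul_assoc]

variable {ι : Type*} {n : ι → ℕ} {u : ι → M}

theorem chainVector_mem_chainSpan (p : (i : ι) × Fin (n i)) :
    chainVector L n u p ∈ chainSpan L n u :=
  Submodule.subset_span (Set.mem_range_self p)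

theorem apply_chainVector_succ {i : ι} {a b : Fin (n i)} (hab : (b : ℕ) = a + 1) :
    L (chainVector L n u ⟨i, b⟩) = chainVector L n u ⟨i, a⟩ := by
  have hrev : (b.rev : ℕ) + 1 = a.rev := by
    rw [Fin.val_rev, Fin.val_rev]
    lia
  rw [chainVector, chainVector, ← Module.End.mul_apply, ← pow_succ', hrev]

namespace IsOrthogonalChainFamily

variable {ε : ι → Rˣ}

theorem units_smul (h : IsOrthogonalChainFamily g L n ε u) (c : ι → Rˣ) :
    IsOrthogonalChainFamily g L n (fun i => c i ^ 2 * ε i) (fun i => c i • u i) where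
  isChainGenerator i := (h.isChainGenerator i).units_smul (c i)
  form_eq_zero hij a := by
    simp only [Units.smul_def, map_smul, LinearMap.smul_apply, h.form_eq_zero hij, smul_zero]

theorem comp {κ : Type*} (h : IsOrthogonalChainFamily g L n ε u) {e : κ → ι}
    (he : e.Injective) : IsOrthogonalChainFamily g L (n ∘ e) (ε ∘ e) (u ∘ e) where
  isChainGenerator i := h.isChainGenerator (e i)
  form_eq_zero hij := h.form_eq_zero (he.ne hij)

theorem finCons {k : ℕ} {n : Fin k → ℕ} {ε : Fin k → Rˣ} {u : Fin k → M}
    (h : IsOrthogonalChainFamily g L n ε u) (hg : g.IsSymm) (hL : g.IsSelfAdjoint L)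
    {m : ℕ} {e : Rˣ} {x : M} (hx : IsChainGenerator g L m e x)
    (hux : ∀ i a, g (u i) ((L ^ a) x) = 0) :
    IsOrthogonalChainFamily g L (Fin.cons m n : Fin (k + 1) → ℕ) (Fin.cons e ε)
      (Fin.cons x u) where
  isChainGenerator := Fin.cases hx h.isChainGenerator
  form_eq_zero {i j} hij a := by
    cases i using Fin.cases with
    | zero =>
      cases j using Fin.cases with
      | zero => exact absurd rfl hij
      | succ j => exact (hg.eq _ _).trans (hux j a)
    | succ i =>
      cases j using Fin.cases with
      | zero => exact (isSelfAdjoint_pow hL a _ _).trans (hux i a)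
      | succ j => exact h.form_eq_zero (fun hij' => hij (congrArg Fin.succ hij')) a

theorem apply_chainVector_of_val_eq_zero (h : IsOrthogonalChainFamily g L n ε u)
    {p : (i : ι) × Fin (n i)} (hp : (p.2 : ℕ) = 0) : L (chainVector L n u p) = 0 := by
  have hrev : (p.2.rev : ℕ) + 1 = n p.1 := by
    rw [Fin.val_rev]
    lia
  rw [chainVector, ← Module.End.mul_apply, ← pow_succ', hrev,
    (h.isChainGenerator p.1).pow_apply_eq_zero]

theorem map_mem_chainSpan (h : IsOrthogonalChainFamily g L n ε u) :
    ∀ w ∈ chainSpan L n u, L w ∈ chainSpan L n u := by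
  refine Submodule.span_le (p := (chainSpan L n u).comap L) |>.mpr (Set.range_subset_iff.mpr ?_)
  rintro ⟨i, b⟩
  rw [SetLike.mem_coe, Submodule.mem_comap]
  by_cases hb : (b : ℕ) = 0
  · rw [h.apply_chainVector_of_val_eq_zero hb]
    exact zero_mem _
  · rw [apply_chainVector_succ (a := ⟨b - 1, by lia⟩) (Nat.succ_pred hb).symm]
    exact chainVector_mem_chainSpan _

theorem generator_mem_chainSpan (h : IsOrthogonalChainFamily g L n ε u) (i : ι) :
    u i ∈ chainSpan L n u := by
  have hpos := (h.isChainGenerator i).pos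
  simpa [chainVector] using
    chainVector_mem_chainSpan (L := L) (u := u) ⟨i, (⟨0, hpos⟩ : Fin (n i)).rev⟩

theorem form_chainVector [DecidableEq ι] (h : IsOrthogonalChainFamily g L n ε u)
    (hL : g.IsSelfAdjoint L) (p q : (i : ι) × Fin (n i)) :
    g (chainVector L n u p) (chainVector L n u q) =
      if p.1 = q.1 ∧ (p.2 : ℕ) + q.2 + 1 = n p.1 then (ε p.1 : R) else 0 := by
  obtain ⟨i, a⟩ := p
  obtain ⟨j, b⟩ := q
  simp only [chainVector, form_pow_apply_pow_apply hL]
  obtain rfl | hij := eq_or_ne i j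
  · rw [(h.isChainGenerator i).form_pow_apply, Fin.val_rev, Fin.val_rev]
    grind
  · rw [h.form_eq_zero hij, if_neg fun hp => hij hp.1]

theorem form_sum_smul_chainVector [Fintype ι] (h : IsOrthogonalChainFamily g L n ε u)
    (hL : g.IsSelfAdjoint L) (c : ((i : ι) × Fin (n i)) → R) (p : (i : ι) × Fin (n i)) :
    g (∑ q, c q • chainVector L n u q) (chainVector L n u ⟨p.1, p.2.rev⟩) = c p * ε p.1 := by
  classical
  simp only [map_sum, LinearMap.sum_apply, map_smul, LinearMap.smul_apply, smul_eq_mul,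
    h.form_chainVector hL]
  rw [Finset.sum_eq_single p]
  · rw [if_pos ⟨rfl, by rw [Fin.val_rev]; lia⟩]
  · rintro ⟨j, b⟩ - hne
    rw [if_neg, mul_zero]
    rintro ⟨rfl, hb⟩
    refine hne (Sigma.ext rfl (heq_of_eq (Fin.ext ?_)))
    rw [Fin.val_rev] at hb
    lia
  · exact fun hp => absurd (Finset.mem_univ p) hp

theorem eq_zero_of_form_sum_smul_chainVector_eq_zero [Fintype ι]
    (h : IsOrthogonalChainFamily g L n ε u) (hL : g.IsSelfAdjoint L)
    {c : ((i : ι) × Fin (n i)) → R}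
    (hc : ∀ p, g (∑ q, c q • chainVector L n u q) (chainVector L n u p) = 0)
    (p : (i : ι) × Fin (n i)) : c p = 0 := by
  have hp := h.form_sum_smul_chainVector hL c p
  rwa [hc, eq_comm, Units.mul_left_eq_zero] at hp

theorem disjoint_chainSpan_orthogonal [Finite ι] (h : IsOrthogonalChainFamily g L n ε u)
    (hg : g.IsSymm) (hL : g.IsSelfAdjoint L) :
    Disjoint (chainSpan L n u) (g.orthogonal (chainSpan L n u)) := by
  have := Fintype.ofFinite ι
  refine Submodule.disjoint_def.mpr fun w hw hw' => ?_
  obtain ⟨c, rfl⟩ := (Submodule.mem_span_range_iff_exists_fun R).mp hw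
  have hc := h.eq_zero_of_form_sum_smul_chainVector_eq_zero hL fun p =>
    (hg.eq _ _).trans (hw' _ (chainVector_mem_chainSpan p))
  exact Finset.sum_eq_zero fun q _ => by rw [hc q, zero_smul]

end IsOrthogonalChainFamily

end Chain

namespace IsOrthogonalChainFamily

variable {R M ι : Type*} [CommRing R] [AddCommGroup M] [Module R M]
  {g : LinearMap.BilinForm R M} {L : Module.End R M} {n : ι → ℕ} {ε : ι → Rˣ} {u : ι → M}

theorem toMatrix_apply [Fintype ι] [DecidableEq ι] (h : IsOrthogonalChainFamily g L n ε u)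
    (b : Module.Basis ((i : ι) × Fin (n i)) R M) (hb : ⇑b = chainVector L n u)
    (p q : (i : ι) × Fin (n i)) :
    LinearMap.toMatrix b b L p q = if p.1 = q.1 ∧ (q.2 : ℕ) = (p.2 : ℕ) + 1 then 1 else 0 := by
  obtain ⟨i, a⟩ := p
  obtain ⟨j, c⟩ := q
  rw [LinearMap.toMatrix_apply, hb]
  by_cases hc : (c : ℕ) = 0
  · rw [h.apply_chainVector_of_val_eq_zero hc, map_zero, Finsupp.zero_apply,
      if_neg fun hp => by simp [hc] at hp]
  · rw [apply_chainVector_succ (a := ⟨c - 1, by lia⟩) (Nat.succ_pred hc).symm, ← hb, b.repr_self,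
      Finsupp.single_apply]
    obtain rfl | hij := eq_or_ne i j
    · simp only [Sigma.mk.injEq, heq_eq_eq, true_and, Fin.ext_iff]
      grind
    · rw [if_neg fun hp => hij (congrArg Sigma.fst hp).symm, if_neg fun hp => hij hp.1]

theorem linearIndependent [Finite ι] (h : IsOrthogonalChainFamily g L n ε u)
    (hL : g.IsSelfAdjoint L) : LinearIndependent R (chainVector L n u) := by
  have := Fintype.ofFinite ι
  refine Fintype.linearIndependent_iff.mpr fun c hc => ?_
  refine h.eq_zero_of_form_sum_smul_chainVector_eq_zero hL fun p => ?_
  rw [hc, map_zero, LinearMap.zero_apply]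

end IsOrthogonalChainFamily

section Field

variable {K V : Type*} [Field K] [AddCommGroup V] [Module K V] {g : LinearMap.BilinForm K V}
  {L : Module.End K V}

theorem exists_form_pow_apply_self_ne_zero [NeZero (2 : K)] [Nontrivial V] (hg : g.IsSymm)
    (hnd : g.Nondegenerate) (hL : g.IsSelfAdjoint L) (hnil : IsNilpotent L) :
    ∃ (m : ℕ) (x : V), L ^ (m + 1) = 0 ∧ g ((L ^ m) x) x ≠ 0 := by
  have : Invertible (2 : K) := invertibleOfNonzero two_ne_zero
  have hpow : L ^ (nilpotencyClass L - 1) ≠ 0 := pow_pred_nilpotencyClass hnil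
  have hform : g.compLeft (L ^ (nilpotencyClass L - 1)) ≠ 0 := fun h =>
    hpow (LinearMap.ext fun v => hnd.1 _ fun w => LinearMap.congr_fun₂ h v w)
  obtain ⟨x, hx⟩ := LinearMap.BilinForm.exists_bilinForm_self_ne_zero hform
    (LinearMap.BilinForm.isSymm_iff.mp (isSymm_compLeft_pow hg hL _))
  refine ⟨nilpotencyClass L - 1, x, ?_, hx⟩
  rw [Nat.sub_add_cancel (pos_nilpotencyClass_iff.mpr hnil), pow_nilpotencyClass hnil]

theorem exists_form_pow_apply_self_eq_zero_of_le [NeZero (2 : K)]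
    (hL : g.IsSelfAdjoint L) {m : ℕ} (hm : L ^ (m + 1) = 0) {x : V} (hx : g ((L ^ m) x) x ≠ 0)
    {d : ℕ} (hd : d ≤ m) :
    ∃ y, g ((L ^ m) y) y = g ((L ^ m) x) x ∧ ∀ a, d ≤ a → a ≠ m → g ((L ^ a) y) y = 0 := by
  have hvanish (y : V) {a : ℕ} (ha : m < a) : g ((L ^ a) y) y = 0 := by
    rw [pow_eq_zero_of_le ha hm, LinearMap.zero_apply, map_zero, LinearMap.zero_apply]
  induction hd using Nat.decreasingInduction with
  | self => exact ⟨x, rfl, fun a ha hne => hvanish x (lt_of_le_of_ne ha hne.symm)⟩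
  | of_succ d hd ih =>
    obtain ⟨y, hy, hya⟩ := ih
    -- `c` solves the linear equation `g (L ^ d z) z = g (L ^ d y) y + 2 * c * g (L ^ m y) y = 0`.
    let c : K := -g ((L ^ d) y) y / (2 * g ((L ^ m) x) x)
    have hexp (a : ℕ) := form_pow_apply_add_smul_pow_apply hL c (m - d) a y
    refine ⟨y + c • (L ^ (m - d)) y, ?_, fun a ha hne => ?_⟩
    · rw [hexp, hvanish y (by lia : m < m + (m - d)), hvanish y (by lia : m < m + 2 * (m - d)), hy]
      ring
    · rw [hexp, hvanish y (by lia : m < a + 2 * (m - d))]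
      obtain rfl | hda := ha.eq_or_lt
      · rw [Nat.add_sub_cancel' hd.le, hy]
        have h2 : (2 : K) ≠ 0 := two_ne_zero
        simp only [c]
        field_simp
        ring
      · rw [hya a hda hne, hvanish y (by lia : m < a + (m - d))]
        ring

theorem exists_isChainGenerator [NeZero (2 : K)] [Nontrivial V] (hg : g.IsSymm)
    (hnd : g.Nondegenerate) (hL : g.IsSelfAdjoint L) (hnil : IsNilpotent L) :
    ∃ (n : ℕ) (ε : Kˣ) (x : V), IsChainGenerator g L n ε x := by
  obtain ⟨m, x, hm, hx⟩ := exists_form_pow_apply_self_ne_zero hg hnd hL hnil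
  obtain ⟨y, hy, hya⟩ := exists_form_pow_apply_self_eq_zero_of_le hL hm hx m.zero_le
  refine ⟨m + 1, Units.mk0 _ hx, y, m.succ_pos, by rw [hm, LinearMap.zero_apply], fun a => ?_⟩
  rw [Units.val_mk0, ← hy]
  split_ifs with ha
  · rw [Nat.succ_injective ha]
  · exact hya a a.zero_le fun h => ha (congrArg (· + 1) h)

theorem exists_isChainGenerator_mem [NeZero (2 : K)] {W : Submodule K V} (hW : ∀ w ∈ W, L w ∈ W)
    (hne : W ≠ ⊥) (hg : g.IsSymm) (hnd : (g.restrict W).Nondegenerate) (hL : g.IsSelfAdjoint L)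
    (hnil : IsNilpotent L) :
    ∃ (n : ℕ) (ε : Kˣ), ∃ x ∈ W, IsChainGenerator g L n ε x := by
  have : Nontrivial W := Submodule.nontrivial_iff_ne_bot.mpr hne
  obtain ⟨n, ε, x, hx⟩ := exists_isChainGenerator (hg.restrict W) hnd (L := L.restrict hW)
    (fun u v => hL u v) (Module.End.isNilpotent.restrict hW hnil)
  have hpow (a : ℕ) : (((L.restrict hW) ^ a) x : V) = (L ^ a) (x : V) := by
    rw [Module.End.pow_restrict, LinearMap.coe_restrict_apply]
  refine ⟨n, ε, x, x.2, hx.pos, ?_, fun a => ?_⟩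
  · rw [← hpow, hx.pow_apply_eq_zero, ZeroMemClass.coe_zero]
  · rw [← hpow]
    exact hx.form_pow_apply a

theorem chainSpan_ne_top_of_sum_lt_finrank {ι : Type*} [Fintype ι] {n : ι → ℕ} {u : ι → V}
    (hlt : ∑ i, n i < Module.finrank K V) : chainSpan L n u ≠ ⊤ := by
  intro htop
  have hle := finrank_range_le_card (R := K) (chainVector L n u)
  rw [Set.finrank, ← chainSpan, htop, finrank_top, Fintype.card_sigma] at hle
  simp only [Fintype.card_fin] at hle
  exact hle.not_gt hlt

namespace IsOrthogonalChainFamily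

variable [FiniteDimensional K V]

theorem sum_le_finrank {ι : Type*} [Fintype ι] {n : ι → ℕ} {ε : ι → Kˣ} {u : ι → V}
    (h : IsOrthogonalChainFamily g L n ε u) (hL : g.IsSelfAdjoint L) :
    ∑ i, n i ≤ Module.finrank K V := by
  simpa using (h.linearIndependent hL).fintype_card_le_finrank

theorem exists_finCons [NeZero (2 : K)] {k : ℕ} {n : Fin k → ℕ} {ε : Fin k → Kˣ}
    {u : Fin k → V} (h : IsOrthogonalChainFamily g L n ε u) (hg : g.IsSymm)
    (hnd : g.Nondegenerate) (hL : g.IsSelfAdjoint L) (hnil : IsNilpotent L)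
    (hlt : ∑ i, n i < Module.finrank K V) :
    ∃ (m : ℕ) (e : Kˣ) (x : V),
      IsOrthogonalChainFamily g L (Fin.cons m n : Fin (k + 1) → ℕ) (Fin.cons e ε)
        (Fin.cons x u) := by
  let W := chainSpan L n u
  have hdisj : Disjoint W (g.orthogonal W) := h.disjoint_chainSpan_orthogonal hg hL
  have hW : (g.restrict W).Nondegenerate :=
    g.nondegenerate_restrict_of_disjoint_orthogonal hg.isRefl hdisj
  have hortho : (g.restrict (g.orthogonal W)).Nondegenerate := by
    refine g.nondegenerate_restrict_of_disjoint_orthogonal hg.isRefl ?_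
    rw [LinearMap.BilinForm.orthogonal_orthogonal hnd hg.isRefl]
    exact hdisj.symm
  have hne : g.orthogonal W ≠ ⊥ := fun hbot => chainSpan_ne_top_of_sum_lt_finrank hlt
    (LinearMap.BilinForm.eq_top_of_restrict_nondegenerate_of_orthogonal_eq_bot hg.isRefl hW hbot)
  have hinv := map_mem_orthogonal hL h.map_mem_chainSpan
  obtain ⟨m, e, x, hxW, hx⟩ := exists_isChainGenerator_mem hinv hne hg hortho hL hnil
  refine ⟨m, e, x, h.finCons hg hL hx fun i a => ?_⟩
  exact Module.End.pow_apply_mem_of_forall_mem a hinv x hxW _ (h.generator_mem_chainSpan i)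

end IsOrthogonalChainFamily

variable [FiniteDimensional K V]

theorem exists_isOrthogonalChainFamily_sum_eq_finrank [NeZero (2 : K)] (hg : g.IsSymm)
    (hnd : g.Nondegenerate) (hL : g.IsSelfAdjoint L) (hnil : IsNilpotent L) :
    ∃ (k : ℕ) (n : Fin k → ℕ) (ε : Fin k → Kˣ) (u : Fin k → V),
      IsOrthogonalChainFamily g L n ε u ∧ ∑ i, n i = Module.finrank K V := by
  let S : Set ℕ := {s | ∃ (k : ℕ) (n : Fin k → ℕ) (ε : Fin k → Kˣ) (u : Fin k → V),
    IsOrthogonalChainFamily g L n ε u ∧ ∑ i, n i = s}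
  have hbdd : BddAbove S := by
    refine ⟨Module.finrank K V, ?_⟩
    rintro _ ⟨k, n, ε, u, h, rfl⟩
    exact h.sum_le_finrank hL
  have hempty : IsOrthogonalChainFamily g L Fin.elim0 Fin.elim0 Fin.elim0 :=
    ⟨fun i => i.elim0, fun {i} => i.elim0⟩
  obtain ⟨_, ⟨k, n, ε, u, h, rfl⟩, hmax⟩ :=
    hbdd.exists_isGreatest_of_nonempty ⟨_, 0, Fin.elim0, Fin.elim0, Fin.elim0, hempty, rfl⟩
  refine ⟨k, n, ε, u, h, (h.sum_le_finrank hL).eq_of_not_lt fun hlt => ?_⟩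
  obtain ⟨m, e, x, h'⟩ := h.exists_finCons hg hnd hL hnil hlt
  have hle := hmax ⟨k + 1, _, _, _, h', rfl⟩
  rw [Fin.sum_cons] at hle
  have hpos : 0 < m := (h'.isChainGenerator 0).pos
  lia

/-- Here `S` is any set of scalars that meets every square class: all units for an arbitrary field,
`{1, -1}` for `ℝ`, and `{1}` for an algebraically closed field. -/
theorem stmt9_general [NeZero (2 : K)] (hg : g.IsSymm) (hnd : g.Nondegenerate)
    (hL : g.IsSelfAdjoint L) (hnil : IsNilpotent L) {S : Set Kˣ}
    (hS : ∀ r : Kˣ, ∃ c : Kˣ, c ^ 2 * r ∈ S) :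
    ∃ (k : ℕ) (n : Fin k → ℕ) (ε : Fin k → Kˣ)
      (b : Module.Basis ((i : Fin k) × Fin (n i)) K V),
      (∀ i, 0 < n i) ∧ Monotone n ∧ (∀ i, ε i ∈ S) ∧
      (∑ i, n i = Module.finrank K V) ∧
      (∀ p q : (i : Fin k) × Fin (n i),
        LinearMap.toMatrix b b L p q =
          if p.1 = q.1 ∧ (q.2 : ℕ) = (p.2 : ℕ) + 1 then 1 else 0) ∧
      (∀ p q : (i : Fin k) × Fin (n i),
        g (b p) (b q) =
          if p.1 = q.1 ∧ (p.2 : ℕ) + (q.2 : ℕ) + 1 = n p.1 then (ε p.1 : K) else 0) := by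
  obtain ⟨k, n, ε, u, h, hsum⟩ := exists_isOrthogonalChainFamily_sum_eq_finrank hg hnd hL hnil
  choose c hc using fun i => hS (ε i)
  let σ := Tuple.sort n
  have hσ := (h.units_smul c).comp σ.injective
  have hsumσ : ∑ i, (n ∘ σ) i = Module.finrank K V := (Equiv.sum_comp σ n).trans hsum
  let b := basisOfLinearIndependentOfCardEqFinrank' _ (hσ.linearIndependent hL)
    (by simpa using hsumσ)
  have hb : ⇑b = chainVector L (n ∘ σ) _ := coe_basisOfLinearIndependentOfCardEqFinrank' ..
  refine ⟨k, n ∘ σ, (fun i => c i ^ 2 * ε i) ∘ σ, b, fun i => (hσ.isChainGenerator i).pos,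
    Tuple.monotone_sort n, fun i => hc (σ i), hsumσ, hσ.toMatrix_apply b hb, fun p q => ?_⟩
  rw [hb, hσ.form_chainVector hL]

end Field

theorem exists_sq_mul_mem_one_neg_one (r : ℝˣ) : ∃ c : ℝˣ, c ^ 2 * r ∈ ({1, -1} : Set ℝˣ) := by
  have habs : 0 < |(r : ℝ)| := abs_pos.mpr r.ne_zero
  let c : ℝˣ := Units.mk0 (√|(r : ℝ)|)⁻¹ (inv_ne_zero (Real.sqrt_pos.mpr habs).ne')
  have hc : (c : ℝ) ^ 2 * |(r : ℝ)| = 1 := by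
    rw [Units.val_mk0, inv_pow, Real.sq_sqrt habs.le, inv_mul_cancel₀ habs.ne']
  refine ⟨c, ?_⟩
  rcases abs_choice (r : ℝ) with hr | hr <;> rw [hr] at hc
  · exact .inl (Units.ext hc)
  · exact .inr (Units.ext (by push_cast; linarith))

/-- If `L` is a `g`-symmetric nilpotent endomorphism of `V`, then there
exist a basis of `V` indexed by `Σ i : Fin k, Fin (n i)` with `n₁ ≤ ... ≤ n_k` positive
and `n₁ + ... + n_k = dim V`, and signs `ε i ∈ {1, -1}`, such that in this basis the
matrix of `L` is `diag(J_{n₁}, ..., J_{n_k})` (blockwise nilpotent Jordan blocks: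
entry `1` at positions `(a, a+1)` inside each block) and the matrix of `g` is
`diag(ε₁ S_{n₁}, ..., ε_k S_{n_k})` (blockwise antidiagonal: entry `ε i` at positions
`(a, b)` with `a + b + 1 = n i` inside block `i`). -/
theorem stmt9 (V : Type*) [AddCommGroup V] [Module ℝ V] [FiniteDimensional ℝ V]
    (g : LinearMap.BilinForm ℝ V) (hg_symm : ∀ u v : V, g u v = g v u)
    (hg_nd : ∀ m : V, (∀ n : V, g m n = 0) → m = 0)
    (L : Module.End ℝ V)
    (hL : ∀ u v : V, g (L u) v = g u (L v))
    (hnil : IsNilpotent L) :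
    ∃ (k : ℕ) (n : Fin k → ℕ) (ε : Fin k → ℝ)
      (b : Module.Basis ((i : Fin k) × Fin (n i)) ℝ V),
      (∀ i, 0 < n i) ∧ Monotone n ∧ (∀ i, ε i = 1 ∨ ε i = -1) ∧
      (∑ i, n i = Module.finrank ℝ V) ∧
      (∀ p q : (i : Fin k) × Fin (n i),
        LinearMap.toMatrix b b L p q =
          if p.1 = q.1 ∧ (q.2 : ℕ) = (p.2 : ℕ) + 1 then 1 else 0) ∧
      (∀ p q : (i : Fin k) × Fin (n i),
        g (b p) (b q) =
          if p.1 = q.1 ∧ (p.2 : ℕ) + (q.2 : ℕ) + 1 = n p.1 then ε p.1 else 0) := by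
  obtain ⟨k, n, ε, b, hn, hmono, hε, h⟩ := stmt9_general ⟨hg_symm⟩
    ((LinearMap.IsRefl.nondegenerate_iff_separatingLeft fun _ _ h => (hg_symm _ _).trans h).mpr
      hg_nd) hL hnil exists_sq_mul_mem_one_neg_one
  exact ⟨k, n, fun i => ε i, b, hn, hmono,
    fun i => (hε i).imp (congrArg Units.val) (congrArg Units.val), h⟩
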